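/- Let (X,d) be a proper geodesic metric space, L : [0,∞) → [0,∞) increasing, convex, superlinear with L(0)=0, H its Legendre transform, and g : X → ℝ Lipschitz. Then for every x ∈ X and Lebesgue-almost every t > 0, the function t ↦ Q_t g(x) is differentiable at t and (d/dt) Q_t g(x) + H(|∇⁻ Q_t g|(x)) = 0, i.e. u(x,t) = Q_t g(x) solves the Hamilton–Jacobi equation ∂_t u + H(|∇⁻ u|) = 0 for a.e. t > 0. -/

import Mathlib

open Metric Filter NNReal Topology MeasureTheory

/-- Hopf–Lax (infimum-convolution) semigroup, with `Q_0 g = g`. -/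
noncomputable def hopfLaxQ {X : Type*} [MetricSpace X] (L : ℝ → ℝ) (g : X → ℝ)
    (t : ℝ) (x : X) : ℝ :=
  if t = 0 then g x else ⨅ y : X, (t * L (dist x y / t) + g y)

/-- The (one-dimensional) Legendre transform `H(w) = sup_{v ≥ 0} (w·v − L(v))`. -/
noncomputable def legendreH (L : ℝ → ℝ) (w : ℝ) : ℝ :=
  sSup ((fun v => w * v - L v) '' Set.Ici 0)

/-- The metric subgradient `|∇⁻ f|(x₀) = limsup_{x → x₀} [f(x₀) − f(x)]₊ / d(x,x₀)`. -/
noncomputable def metricSubgradient {X : Type*} [MetricSpace X] (f : X → ℝ) (x₀ : X) : ℝ :=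
  limsup (fun x => max (f x₀ - f x) 0 / dist x x₀) (𝓝[≠] x₀)

/-! The Hopf–Lax operators form a semigroup, so differentiating `s ↦ Q_s g x` at `t` from the
right amounts to differentiating `s ↦ Q_s f x` at `0` for `f = Q_t g`, which is again Lipschitz.
Write `w = |∇⁻ f|(x)`. If `a > w`, then `f x - f y ≤ a · d(x, y)` for `y` near `x`, and Young's
inequality `a v ≤ L v + H a` yields `f x - Q_s f x ≤ s H(a)` for small `s`, far away `y` being
too costly to matter. If `0 ≤ a < w`, then some `y` close to `x` have `f x - f y > a · d(x, y)`,
and using them at time `s = d(x, y) / v` yields `f x - Q_s f x ≥ s (a v - L v)` for arbitrarily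
small `s`. Letting `a → w`, a right derivative at `0` can only be `-H(w)`. Finally
`Q_s g x - s L(0)` is antitone in `s`, so by Lebesgue's theorem `s ↦ Q_s g x` is differentiable
almost everywhere. -/

/-- Any two points of `X` are joined by intermediate points at every ratio `τ ∈ [0, 1]`; in a
complete space this amounts to the existence of minimizing geodesics. -/
def IsGeodesicSpace (X : Type*) [PseudoMetricSpace X] : Prop :=
  ∀ x y : X, ∀ τ : ℝ, 0 ≤ τ → τ ≤ 1 →
    ∃ z : X, dist x z = τ * dist x y ∧ dist z y = (1 - τ) * dist x y

lemma IsGeodesicSpace.exists_dist_le_le {X : Type*} [PseudoMetricSpace X] (hX : IsGeodesicSpace X)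
    {x y : X} {r s : ℝ} (hr : 0 ≤ r) (hs : 0 ≤ s) (hxy : dist x y ≤ r + s) :
    ∃ z, dist x z ≤ r ∧ dist z y ≤ s := by
  obtain hrs | hrs := (add_nonneg hr hs).eq_or_lt
  · exact ⟨x, by simpa using hr, by linarith⟩
  obtain ⟨z, hxz, hzy⟩ := hX x y (r / (r + s)) (by positivity) (by rw [div_le_one hrs]; linarith)
  refine ⟨z, ?_, ?_⟩
  · calc dist x z = r / (r + s) * dist x y := hxz
      _ ≤ r / (r + s) * (r + s) := by gcongr
      _ = r := div_mul_cancel₀ r hrs.ne'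
  · calc dist z y = s / (r + s) * dist x y := by rw [hzy]; field_simp; ring
      _ ≤ s / (r + s) * (r + s) := by gcongr
      _ = s := div_mul_cancel₀ s hrs.ne'

section LegendreTransform

variable {L : ℝ → ℝ}

/-- The Legendre transform of `L` is finite everywhere, so that `legendreH L` is a genuine supremum
and never the junk value of `sSup` on an unbounded set. -/
def HasFiniteLegendre (L : ℝ → ℝ) : Prop :=
  ∀ w : ℝ, BddAbove ((fun v => w * v - L v) '' Set.Ici 0)

lemma hasFiniteLegendre_of_tendsto_div_atTop (hbdd : BddBelow (L '' Set.Ici 0))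
    (hsuper : Tendsto (fun u => L u / u) atTop atTop) : HasFiniteLegendre L := by
  intro w
  obtain ⟨m, hm⟩ := hbdd
  obtain ⟨V, hV⟩ : ∃ V, ∀ v ≥ V, w * v ≤ L v := by
    refine eventually_atTop.1 ?_
    filter_upwards [hsuper.eventually_ge_atTop w, eventually_gt_atTop 0] with v hwv hv
    exact (le_div_iff₀ hv).1 hwv
  refine ⟨max 0 (|w| * V - m), ?_⟩
  rintro _ ⟨v, hv, rfl⟩
  obtain hvV | hvV := le_total V v
  · exact le_max_of_le_left (sub_nonpos.2 (hV v hvV))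
  · have hwv : w * v ≤ |w| * V := mul_le_mul (le_abs_self w) hvV hv (abs_nonneg w)
    exact le_max_of_le_right (sub_le_sub hwv (hm (Set.mem_image_of_mem L hv)))

lemma legendreH_le {w b : ℝ} (h : ∀ v, 0 ≤ v → w * v - L v ≤ b) : legendreH L w ≤ b :=
  csSup_le (Set.nonempty_Ici.image _) (Set.forall_mem_image.2 h)

namespace HasFiniteLegendre

lemma mul_sub_le_legendreH (hL : HasFiniteLegendre L) (w : ℝ) {v : ℝ} (hv : 0 ≤ v) :
    w * v - L v ≤ legendreH L w :=
  le_csSup (hL w) ⟨v, hv, rfl⟩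

lemma neg_apply_zero_le_legendreH (hL : HasFiniteLegendre L) (w : ℝ) : -L 0 ≤ legendreH L w := by
  simpa using hL.mul_sub_le_legendreH w le_rfl

lemma mul_le_perspective_add_legendreH (hL : HasFiniteLegendre L) (w : ℝ) {r t : ℝ} (hr : 0 ≤ r)
    (ht : 0 < t) : w * r ≤ t * L (r / t) + t * legendreH L w := by
  have young : w * (r / t) ≤ L (r / t) + legendreH L w := by
    linarith [hL.mul_sub_le_legendreH w (div_nonneg hr ht.le)]
  calc w * r = t * (w * (r / t)) := by field_simp
    _ ≤ t * (L (r / t) + legendreH L w) := by gcongr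
    _ = t * L (r / t) + t * legendreH L w := mul_add _ _ _

lemma eventually_mul_add_le (hL : HasFiniteLegendre L) (a b : ℝ) :
    ∀ᶠ v in atTop, a * v + b ≤ L v := by
  filter_upwards [eventually_ge_atTop 0, eventually_ge_atTop (legendreH L (a + 1) + b)]
    with v hv0 hv
  linarith [hL.mul_sub_le_legendreH (a + 1) hv0]

lemma convexOn_legendreH (hL : HasFiniteLegendre L) : ConvexOn ℝ Set.univ (legendreH L) := by
  refine ⟨convex_univ, fun w₁ _ w₂ _ a b ha hb hab => legendreH_le fun v hv => ?_⟩
  have h₁ := mul_le_mul_of_nonneg_left (hL.mul_sub_le_legendreH w₁ hv) ha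
  have h₂ := mul_le_mul_of_nonneg_left (hL.mul_sub_le_legendreH w₂ hv) hb
  calc (a • w₁ + b • w₂) * v - L v
      = (a * w₁ + b * w₂) * v - (a + b) * L v := by simp only [smul_eq_mul, hab, one_mul]
    _ = a * (w₁ * v - L v) + b * (w₂ * v - L v) := by ring
    _ ≤ a • legendreH L w₁ + b • legendreH L w₂ := add_le_add h₁ h₂

lemma continuous_legendreH (hL : HasFiniteLegendre L) : Continuous (legendreH L) :=
  continuousOn_univ.1 (hL.convexOn_legendreH.continuousOn isOpen_univ)

end HasFiniteLegendre

lemma perspective_add_le (hconv : ConvexOn ℝ (Set.Ici 0) L) {r₁ r₂ s t : ℝ}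
    (hr₁ : 0 ≤ r₁) (hr₂ : 0 ≤ r₂) (hs : 0 < s) (ht : 0 < t) :
    (s + t) * L ((r₁ + r₂) / (s + t)) ≤ s * L (r₁ / s) + t * L (r₂ / t) := by
  have jensen : L (s / (s + t) * (r₁ / s) + t / (s + t) * (r₂ / t)) ≤
      s / (s + t) * L (r₁ / s) + t / (s + t) * L (r₂ / t) :=
    hconv.2 (div_nonneg hr₁ hs.le) (div_nonneg hr₂ ht.le) (by positivity) (by positivity)
      (by field_simp)
  calc (s + t) * L ((r₁ + r₂) / (s + t))
      = (s + t) * L (s / (s + t) * (r₁ / s) + t / (s + t) * (r₂ / t)) := by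
        congr 2; field_simp
    _ ≤ (s + t) * (s / (s + t) * L (r₁ / s) + t / (s + t) * L (r₂ / t)) := by gcongr
    _ = s * L (r₁ / s) + t * L (r₂ / t) := by field_simp

lemma perspective_mono (hmono : MonotoneOn L (Set.Ici 0)) {r₁ r₂ t : ℝ}
    (hr₁ : 0 ≤ r₁) (hr : r₁ ≤ r₂) (ht : 0 < t) : t * L (r₁ / t) ≤ t * L (r₂ / t) := by
  gcongr
  exact hmono (div_nonneg hr₁ ht.le) (div_nonneg (hr₁.trans hr) ht.le) (by gcongr)

end LegendreTransform

section HopfLax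

variable {X : Type*} [MetricSpace X] {L : ℝ → ℝ} {g : X → ℝ} {K : ℝ≥0} {s t : ℝ}

lemma hopfLaxQ_zero (L : ℝ → ℝ) (g : X → ℝ) : hopfLaxQ L g 0 = g :=
  funext fun _ => if_pos rfl

lemma le_hopfLaxQ (ht : 0 < t) {x : X} {b : ℝ} (h : ∀ y, b ≤ t * L (dist x y / t) + g y) :
    b ≤ hopfLaxQ L g t x := by
  have : Nonempty X := ⟨x⟩
  rw [hopfLaxQ, if_neg ht.ne']
  exact le_ciInf h

lemma hopfLaxQ_le (hL : HasFiniteLegendre L) (hg : LipschitzWith K g) (ht : 0 < t) (x y : X) :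
    hopfLaxQ L g t x ≤ t * L (dist x y / t) + g y := by
  rw [hopfLaxQ, if_neg ht.ne']
  refine ciInf_le ⟨g x - t * legendreH L K, ?_⟩ y
  rintro _ ⟨z, rfl⟩
  linarith [hg.le_add_mul x z,
    hL.mul_le_perspective_add_legendreH K (dist_nonneg (x := x) (y := z)) ht]

lemma hopfLaxQ_le_mul_apply_zero_add (hL : HasFiniteLegendre L) (hg : LipschitzWith K g)
    (ht : 0 ≤ t) (x : X) : hopfLaxQ L g t x ≤ t * L 0 + g x := by
  obtain rfl | ht := ht.eq_or_lt
  · simp [hopfLaxQ_zero]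
  · simpa using hopfLaxQ_le hL hg ht x x

lemma lipschitzWith_hopfLaxQ (hX : IsGeodesicSpace X) (hmono : MonotoneOn L (Set.Ici 0))
    (hL : HasFiniteLegendre L) (hg : LipschitzWith K g) (ht : 0 ≤ t) :
    LipschitzWith K (hopfLaxQ L g t) := by
  obtain rfl | ht := ht.eq_or_lt
  · rwa [hopfLaxQ_zero]
  refine LipschitzWith.of_le_add_mul K fun x x' => sub_le_iff_le_add.1 <| le_hopfLaxQ ht fun y => ?_
  obtain ⟨z, hxz, hzy⟩ := hX.exists_dist_le_le (x := x) (y := y) dist_nonneg dist_nonneg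
    ((dist_triangle x x' y).trans_eq (add_comm _ _))
  have cost_le := perspective_mono hmono dist_nonneg hxz ht
  have g_le : g z ≤ g y + K * dist x x' := (hg.le_add_mul z y).trans (by gcongr)
  linarith [hopfLaxQ_le hL hg ht x z]

lemma hopfLaxQ_add_le (hmono : MonotoneOn L (Set.Ici 0)) (hconv : ConvexOn ℝ (Set.Ici 0) L)
    (hL : HasFiniteLegendre L) (hg : LipschitzWith K g) (hs : 0 < s) (ht : 0 < t) (x y : X) :
    hopfLaxQ L g (s + t) x ≤ s * L (dist x y / s) + hopfLaxQ L g t y := by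
  refine sub_le_iff_le_add'.1 <| le_hopfLaxQ ht fun z => sub_le_iff_le_add'.2 ?_
  calc hopfLaxQ L g (s + t) x
      ≤ (s + t) * L (dist x z / (s + t)) + g z := hopfLaxQ_le hL hg (add_pos hs ht) x z
    _ ≤ (s + t) * L ((dist x y + dist y z) / (s + t)) + g z := by
        gcongr ?_ + g z
        exact perspective_mono hmono dist_nonneg (dist_triangle x y z)
          (add_pos hs ht)
    _ ≤ s * L (dist x y / s) + t * L (dist y z / t) + g z := by
        gcongr ?_ + g z
        exact perspective_add_le hconv dist_nonneg dist_nonneg hs ht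
    _ = s * L (dist x y / s) + (t * L (dist y z / t) + g z) := add_assoc _ _ _

lemma hopfLaxQ_hopfLaxQ_le_add (hX : IsGeodesicSpace X) (hmono : MonotoneOn L (Set.Ici 0))
    (hL : HasFiniteLegendre L) (hg : LipschitzWith K g) (hs : 0 < s) (ht : 0 < t) (x : X) :
    hopfLaxQ L (hopfLaxQ L g t) s x ≤ hopfLaxQ L g (s + t) x := by
  refine le_hopfLaxQ (add_pos hs ht) fun z => ?_
  -- Split the geodesic from `x` to `z` in the ratio `s : t`, so that both parts have equal speed.
  set v := dist x z / (s + t) with hv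
  obtain ⟨y, hxy, hyz⟩ := hX.exists_dist_le_le (x := x) (y := z) (r := s * v) (s := t * v)
    (by positivity) (by positivity) (by rw [hv]; field_simp; rfl)
  have cost_xy := perspective_mono hmono dist_nonneg hxy hs
  have cost_yz := perspective_mono hmono dist_nonneg hyz ht
  rw [mul_div_cancel_left₀ v hs.ne'] at cost_xy
  rw [mul_div_cancel_left₀ v ht.ne'] at cost_yz
  have outer := hopfLaxQ_le hL (lipschitzWith_hopfLaxQ hX hmono hL hg ht.le) hs x y
  linarith [hopfLaxQ_le hL hg ht y z]

theorem hopfLaxQ_add (hX : IsGeodesicSpace X) (hmono : MonotoneOn L (Set.Ici 0))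
    (hconv : ConvexOn ℝ (Set.Ici 0) L) (hL : HasFiniteLegendre L) (hg : LipschitzWith K g)
    (hs : 0 ≤ s) (ht : 0 ≤ t) : hopfLaxQ L g (s + t) = hopfLaxQ L (hopfLaxQ L g t) s := by
  obtain rfl | hs := hs.eq_or_lt
  · rw [zero_add, hopfLaxQ_zero]
  obtain rfl | ht := ht.eq_or_lt
  · rw [add_zero, hopfLaxQ_zero]
  funext x
  exact le_antisymm (le_hopfLaxQ hs fun y => hopfLaxQ_add_le hmono hconv hL hg hs ht x y)
    (hopfLaxQ_hopfLaxQ_le_add hX hmono hL hg hs ht x)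

lemma antitoneOn_hopfLaxQ_sub_mul_apply_zero (hX : IsGeodesicSpace X)
    (hmono : MonotoneOn L (Set.Ici 0)) (hconv : ConvexOn ℝ (Set.Ici 0) L)
    (hL : HasFiniteLegendre L) (hg : LipschitzWith K g) (x : X) :
    AntitoneOn (fun t => hopfLaxQ L g t x - t * L 0) (Set.Ici 0) := by
  intro t ht t' _ htt'
  have flow_le := hopfLaxQ_le_mul_apply_zero_add hL (lipschitzWith_hopfLaxQ hX hmono hL hg ht)
    (sub_nonneg.2 htt') x
  rw [← hopfLaxQ_add hX hmono hconv hL hg (sub_nonneg.2 htt') ht, sub_add_cancel] at flow_le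
  linarith

lemma ae_differentiableAt_hopfLaxQ (hX : IsGeodesicSpace X) (hmono : MonotoneOn L (Set.Ici 0))
    (hconv : ConvexOn ℝ (Set.Ici 0) L) (hL : HasFiniteLegendre L) (hg : LipschitzWith K g)
    (x : X) :
    ∀ᵐ t ∂(volume.restrict (Set.Ioi (0 : ℝ))),
      DifferentiableAt ℝ (fun s => hopfLaxQ L g s x) t := by
  have hanti := (antitoneOn_hopfLaxQ_sub_mul_apply_zero hX hmono hconv hL hg x).mono
    Set.Ioi_subset_Ici_self
  filter_upwards [hanti.neg.ae_differentiableWithinAt measurableSet_Ioi,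
    ae_restrict_mem measurableSet_Ioi] with t hdiff ht
  have hlin : DifferentiableAt ℝ (fun s => s * L 0) t := by fun_prop
  simpa [Pi.neg_def] using hlin.sub (hdiff.differentiableAt (Ioi_mem_nhds ht))

end HopfLax

section MetricSubgradient

variable {X : Type*} [MetricSpace X] {f : X → ℝ} {x : X} {a : ℝ}

lemma eventually_sub_le_mul_dist_of_metricSubgradient_lt {K : ℝ≥0} (hf : LipschitzWith K f)
    (ha : metricSubgradient f x < a) : ∀ᶠ y in 𝓝 x, f x - f y ≤ a * dist x y := by
  have hbdd : IsBoundedUnder (· ≤ ·) (𝓝[≠] x) (fun y => max (f x - f y) 0 / dist y x) := by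
    refine isBoundedUnder_of ⟨K, fun y => div_le_of_le_mul₀ dist_nonneg K.2 (max_le ?_ ?_)⟩
    · rw [dist_comm]
      exact sub_le_iff_le_add'.2 (hf.le_add_mul x y)
    · positivity
  filter_upwards [eventually_nhdsWithin_iff.1 (eventually_lt_of_limsup_lt ha hbdd)] with y hy
  obtain rfl | hyx := eq_or_ne y x
  · simp
  · rw [dist_comm]
    exact (le_max_left _ _).trans ((div_lt_iff₀ (dist_pos.2 hyx)).1 (hy hyx)).le

lemma frequently_mul_dist_lt_sub_of_lt_metricSubgradient (ha0 : 0 ≤ a)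
    (ha : a < metricSubgradient f x) : ∃ᶠ y in 𝓝[≠] x, a * dist x y < f x - f y := by
  -- On an isolated point the limsup is over `⊥` and takes the junk value `0`.
  have hne : (𝓝[≠] x).NeBot := by
    refine ⟨fun hbot => (ha0.trans_lt ha).ne' ?_⟩
    simp [metricSubgradient, hbot, limsup, limsSup]
  have hcobdd : IsCoboundedUnder (· ≤ ·) (𝓝[≠] x) (fun y => max (f x - f y) 0 / dist y x) :=
    (isBoundedUnder_of ⟨0, fun y => div_nonneg (le_max_right _ _) dist_nonneg⟩ :
      IsBoundedUnder (· ≥ ·) _ _).isCoboundedUnder_le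
  refine ((frequently_lt_of_lt_limsup hcobdd ha).and_eventually self_mem_nhdsWithin).mono ?_
  rintro y ⟨hy, hyx⟩
  rw [lt_div_iff₀ (dist_pos.2 hyx), dist_comm] at hy
  exact (lt_max_iff.1 hy).resolve_right (by positivity : 0 ≤ a * dist x y).not_gt

end MetricSubgradient

section InitialSlope

variable {X : Type*} [MetricSpace X] {L : ℝ → ℝ} {f : X → ℝ} {K : ℝ≥0} {x : X} {a M : ℝ}

lemma eventually_sub_hopfLaxQ_le (hL : HasFiniteLegendre L) (hf : LipschitzWith K f)
    (ha : metricSubgradient f x < a) :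
    ∀ᶠ s in 𝓝[>] (0 : ℝ), f x - hopfLaxQ L f s x ≤ s * legendreH L a := by
  obtain ⟨δ, hδ, near⟩ := Metric.eventually_nhds_iff.1
    (eventually_sub_le_mul_dist_of_metricSubgradient_lt hf ha)
  have far : ∀ᶠ s in 𝓝[>] (0 : ℝ), ∀ v ≥ δ * s⁻¹, K * v + L 0 ≤ L v :=
    (tendsto_inv_nhdsGT_zero.const_mul_atTop hδ).eventually
      (eventually_forall_ge_atTop.2 (hL.eventually_mul_add_le K (L 0)))
  filter_upwards [far, self_mem_nhdsWithin] with s far (hs : 0 < s)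
  refine sub_le_comm.1 <| le_hopfLaxQ hs fun y => ?_
  obtain hy | hy := lt_or_ge (dist y x) δ
  · linarith [near hy, hL.mul_le_perspective_add_legendreH a (dist_nonneg (x := x) (y := y)) hs]
  · rw [dist_comm] at hy
    have hcost : K * (dist x y / s) + L 0 ≤ L (dist x y / s) :=
      far _ (by rw [← div_eq_mul_inv]; gcongr)
    have hspeed : s * (K * (dist x y / s)) = K * dist x y := by field_simp
    have hH := hL.neg_apply_zero_le_legendreH a
    linarith [hf.le_add_mul x y, mul_le_mul_of_nonneg_left hcost hs.le,
      mul_le_mul_of_nonneg_left hH hs.le]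

lemma frequently_le_sub_hopfLaxQ (hL : HasFiniteLegendre L) (hf : LipschitzWith K f) (ha0 : 0 ≤ a)
    (ha : a < metricSubgradient f x) {v : ℝ} (hv : 0 < v) :
    ∃ᶠ s in 𝓝[>] (0 : ℝ), s * (a * v - L v) ≤ f x - hopfLaxQ L f s x := by
  have htime : Tendsto (fun y => dist x y / v) (𝓝[≠] x) (𝓝[>] 0) := by
    refine tendsto_nhdsWithin_iff.2 ⟨tendsto_nhdsWithin_of_tendsto_nhds ?_, ?_⟩
    · exact (Continuous.tendsto' (by fun_prop) x 0 (by simp))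
    · filter_upwards [self_mem_nhdsWithin] with y hy
      exact div_pos (dist_pos.2 (Ne.symm hy)) hv
  refine htime.frequently <|
    ((frequently_mul_dist_lt_sub_of_lt_metricSubgradient ha0 ha).and_eventually
      self_mem_nhdsWithin).mono ?_
  rintro y ⟨hslope, hyx⟩
  have hd : 0 < dist x y := dist_pos.2 (Ne.symm hyx)
  have hQ := hopfLaxQ_le hL hf (div_pos hd hv) x y
  rw [div_div_cancel₀ hd.ne'] at hQ
  calc dist x y / v * (a * v - L v) = a * dist x y - dist x y / v * L v := by field_simp
    _ ≤ f x - hopfLaxQ L f (dist x y / v) x := by linarith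

lemma le_legendreH_metricSubgradient (hL : HasFiniteLegendre L) (hf : LipschitzWith K f)
    (hM : Tendsto (fun s => (f x - hopfLaxQ L f s x) / s) (𝓝[>] 0) (𝓝 M)) :
    M ≤ legendreH L (metricSubgradient f x) := by
  set w := metricSubgradient f x
  have hcont : Tendsto (legendreH L) (𝓝[>] w) (𝓝 (legendreH L w)) :=
    hL.continuous_legendreH.continuousWithinAt
  refine ge_of_tendsto hcont ?_
  filter_upwards [self_mem_nhdsWithin] with a ha
  refine le_of_tendsto hM ?_
  filter_upwards [eventually_sub_hopfLaxQ_le hL hf ha, self_mem_nhdsWithin] with s hs hspos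
  exact (div_le_iff₀' hspos).2 hs

lemma legendreH_metricSubgradient_le (hmin : IsMinOn L (Set.Ici 0) 0) (hL : HasFiniteLegendre L)
    (hf : LipschitzWith K f)
    (hM : Tendsto (fun s => (f x - hopfLaxQ L f s x) / s) (𝓝[>] 0) (𝓝 M)) :
    legendreH L (metricSubgradient f x) ≤ M := by
  set w := metricSubgradient f x
  have hM0 : -L 0 ≤ M := by
    refine ge_of_tendsto hM ?_
    filter_upwards [self_mem_nhdsWithin] with s (hs : 0 < s)
    rw [le_div_iff₀' hs]
    linarith [hopfLaxQ_le_mul_apply_zero_add hL hf hs.le x]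
  refine legendreH_le fun v hv => ?_
  have hLv : L 0 ≤ L v := hmin hv
  obtain hw | hw := le_or_gt w 0
  · linarith [mul_nonpos_of_nonpos_of_nonneg hw hv]
  obtain rfl | hv := hv.eq_or_lt
  · simpa using hM0
  have hlim : Tendsto (fun a => a * v - L v) (𝓝[<] w) (𝓝 (w * v - L v)) :=
    tendsto_nhdsWithin_of_tendsto_nhds (Continuous.tendsto (by fun_prop) w)
  refine le_of_tendsto hlim ?_
  filter_upwards [Ioo_mem_nhdsLT hw] with a ⟨ha0, haw⟩
  refine ge_of_tendsto_of_frequently hM <|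
    ((frequently_le_sub_hopfLaxQ hL hf ha0.le haw hv).and_eventually self_mem_nhdsWithin).mono ?_
  rintro s ⟨hs, hspos⟩
  exact (le_div_iff₀' hspos).2 hs

end InitialSlope

lemma tendsto_slope_zero_of_hasDerivWithinAt_Ioi {φ : ℝ → ℝ} {D t : ℝ}
    (hD : HasDerivWithinAt φ D (Set.Ioi t) t) :
    Tendsto (fun s => (φ (s + t) - φ t) / s) (𝓝[>] 0) (𝓝 D) := by
  have hshift : Tendsto (fun s => s + t) (𝓝[>] 0) (𝓝[>] t) := by
    refine tendsto_nhdsWithin_iff.2 ⟨?_, ?_⟩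
    · exact tendsto_nhdsWithin_of_tendsto_nhds (Continuous.tendsto' (by fun_prop) 0 t (zero_add t))
    · filter_upwards [self_mem_nhdsWithin] with s hs using lt_add_of_pos_left t hs
  have hslope := (hasDerivWithinAt_iff_tendsto_slope' Set.self_notMem_Ioi).1 hD
  simpa [Function.comp_def, slope_def_field] using hslope.comp hshift

theorem eq_neg_legendreH_of_hasDerivWithinAt_hopfLaxQ {X : Type*} [MetricSpace X]
    (hX : IsGeodesicSpace X) {L : ℝ → ℝ} (hmono : MonotoneOn L (Set.Ici 0))
    (hconv : ConvexOn ℝ (Set.Ici 0) L) (hL : HasFiniteLegendre L) {g : X → ℝ} {K : ℝ≥0}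
    (hg : LipschitzWith K g) {x : X} {t D : ℝ} (ht : 0 ≤ t)
    (hD : HasDerivWithinAt (fun s => hopfLaxQ L g s x) D (Set.Ioi t) t) :
    D = -legendreH L (metricSubgradient (hopfLaxQ L g t) x) := by
  have hlip := lipschitzWith_hopfLaxQ hX hmono hL hg ht
  have hslope : Tendsto
      (fun s => (hopfLaxQ L g t x - hopfLaxQ L (hopfLaxQ L g t) s x) / s) (𝓝[>] 0) (𝓝 (-D)) := by
    refine (tendsto_slope_zero_of_hasDerivWithinAt_Ioi hD).neg.congr' ?_
    filter_upwards [self_mem_nhdsWithin] with s (hs : 0 < s)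
    rw [← neg_div, neg_sub, hopfLaxQ_add hX hmono hconv hL hg hs.le ht]
  have hmin : IsMinOn L (Set.Ici 0) 0 := fun v hv => hmono Set.self_mem_Ici hv hv
  exact neg_eq_iff_eq_neg.1 <| le_antisymm (le_legendreH_metricSubgradient hL hlip hslope)
    (legendreH_metricSubgradient_le hmin hL hlip hslope)

theorem hopfLax_solves_HJ_ae_general
    {X : Type*} [MetricSpace X] (hX : IsGeodesicSpace X)
    {L : ℝ → ℝ} (hmono : MonotoneOn L (Set.Ici 0)) (hconv : ConvexOn ℝ (Set.Ici 0) L)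
    (hsuper : Tendsto (fun u => L u / u) atTop atTop)
    {g : X → ℝ} {K : ℝ≥0} (hg : LipschitzWith K g) (x : X) :
    ∀ᵐ t ∂(volume.restrict (Set.Ioi (0 : ℝ))),
      ∃ D : ℝ, HasDerivAt (fun s => hopfLaxQ L g s x) D t ∧
        D + legendreH L (metricSubgradient (fun y => hopfLaxQ L g t y) x) = 0 := by
  have hL : HasFiniteLegendre L :=
    hasFiniteLegendre_of_tendsto_div_atTop
      ⟨L 0, Set.forall_mem_image.2 fun _ hv => hmono Set.self_mem_Ici hv hv⟩ hsuper
  filter_upwards [ae_differentiableAt_hopfLaxQ hX hmono hconv hL hg x,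
    ae_restrict_mem measurableSet_Ioi] with t hdiff (ht : 0 < t)
  exact ⟨_, hdiff.hasDerivAt, eq_neg_iff_add_eq_zero.1 <|
    eq_neg_legendreH_of_hasDerivWithinAt_hopfLaxQ hX hmono hconv hL hg ht.le
      hdiff.hasDerivAt.hasDerivWithinAt⟩

/-- For every `x` and Lebesgue-a.e. `t > 0`, `u(x,t) = Q_t g(x)` is differentiable
in `t` and solves the Hamilton–Jacobi equation `∂_t u + H(|∇⁻ u|) = 0`. -/
theorem hopfLax_solves_HJ_ae
    {X : Type*} [MetricSpace X] [ProperSpace X] [Nonempty X]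
    (hgeo : ∀ x y : X, ∀ τ : ℝ, 0 ≤ τ → τ ≤ 1 →
      ∃ z : X, dist x z = τ * dist x y ∧ dist z y = (1 - τ) * dist x y)
    (L : ℝ → ℝ) (hL0 : L 0 = 0)
    (hLnonneg : ∀ u, 0 ≤ u → 0 ≤ L u)
    (hLmono : MonotoneOn L (Set.Ici 0))
    (hLconv : ConvexOn ℝ (Set.Ici 0) L)
    (hLsuper : Tendsto (fun u => L u / u) atTop atTop)
    (g : X → ℝ) (hg : ∃ K : ℝ≥0, LipschitzWith K g)
    (x : X) :
    ∀ᵐ t ∂(volume.restrict (Set.Ioi (0:ℝ))),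
      ∃ D : ℝ, HasDerivAt (fun s => hopfLaxQ L g s x) D t ∧
        D + legendreH L (metricSubgradient (fun y => hopfLaxQ L g t y) x) = 0 := by
  obtain ⟨K, hK⟩ := hg
  exact hopfLax_solves_HJ_ae_general hgeo hLmono hLconv hLsuper hK x
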